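/- Let 0 ≤ q < 1 and let Ω ∈ U_q(s_p, M_p) be a p×p matrix with inverse Σ = Ω^{-1}. Let Σ̂ ∈ ℝ^{p×p} be a symmetric matrix and let λ ≥ 0 satisfy λ ≥ 3‖Ω‖_{L1}‖Σ̂ − Σ‖_∞ and ‖Ω‖_{L1}^{−q} λ^{1−q} s_p ≤ 1/2. Let Ω̂ = (β̂_1,…,β̂_p) where, for each i, β̂_i is a SCIO column estimator (a global minimizer of β ↦ (1/2)βᵀΣ̂β − e_iᵀβ + λ|β|_1), and let Ω̃ be the symmetrization of Ω̂. Then ‖Ω̃ − Ω‖_∞ ≤ 4 ‖Ω‖_{L1} λ. -/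

import Mathlib

open Matrix
open scoped BigOperators

/-- The ℓ1 norm of a vector in ℝ^p. -/
noncomputable def vecL1 {p : ℕ} (a : Fin p → ℝ) : ℝ := ∑ i, |a i|

/-- The entrywise supremum norm of a p×p matrix. -/
noncomputable def matLinf {p : ℕ} (A : Matrix (Fin p) (Fin p) ℝ) : ℝ := ⨆ i, ⨆ j, |A i j|

/-- The maximum absolute column-sum norm of a p×p matrix. -/
noncomputable def matL1 {p : ℕ} (A : Matrix (Fin p) (Fin p) ℝ) : ℝ := ⨆ j, ∑ i, |A i j|

/-- The SCIO objective function β ↦ (1/2)βᵀ Σ̂ β − eᵀβ + λ|β|₁. -/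
noncomputable def scioObj {p : ℕ} (S : Matrix (Fin p) (Fin p) ℝ) (e : Fin p → ℝ)
    (lam : ℝ) (β : Fin p → ℝ) : ℝ :=
  (1 / 2) * (β ⬝ᵥ S.mulVec β) - e ⬝ᵥ β + lam * vecL1 β

/-- Symmetrization of a matrix: ω̃_ij = β̂_ij if |β̂_ij| ≤ |β̂_ji|, and β̂_ji otherwise. -/
noncomputable def symmetrize {p : ℕ} (A : Matrix (Fin p) (Fin p) ℝ) : Matrix (Fin p) (Fin p) ℝ :=
  fun i j => if |A i j| ≤ |A j i| then A i j else A j i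

/-!
Write `β` for the `i`-th column of `Ω`, `b` for its estimator, `h = b - β`, `A = ‖Ω‖_{L1}`, and
`H`, `L` for the sup norm and the `ℓ1` norm of `h`. First-order optimality of `b` bounds the
residual `Shat b - eᵢ` by `λ`, and the choice of `λ` bounds `Shat β - eᵢ` by `λ / 3`; multiplying
`Ω⁻¹ h` by `Ω` gives `H ≤ A (4 λ / 3) + λ L / 3`. Comparing the objective at `b` and at `β` gives
the cone condition `λ (|b|₁ - |β|₁) ≤ λ L / 3`, which turns into `λ L ≤ 3 λ ∑ₖ min |βₖ| H`. Weak
sparsity enters only through the capped sum `∑ₖ min |βₖ| (A λ) ≤ A / 2`, which yields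
`λ L ≤ 3 (H + A λ) / 2`. The two bounds together force `H ≤ 11 A λ / 3`.
-/

section RealInequalities

lemma nonneg_of_forall_pos_add_mul {a b : ℝ} (h : ∀ t : ℝ, 0 < t → 0 ≤ a + t * b) : 0 ≤ a := by
  have hlim : Filter.Tendsto (fun t : ℝ => a + t * b) (nhdsWithin 0 (Set.Ioi 0)) (nhds a) :=
    (Continuous.tendsto' (by fun_prop) 0 a (by ring)).mono_left nhdsWithin_le_nhds
  exact ge_of_tendsto hlim (eventually_mem_nhdsWithin.mono h)

lemma abs_sub_add_abs_sub_abs_le (x y : ℝ) : |x - y| + |y| - |x| ≤ 2 * min |y| |x - y| := by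
  rw [mul_min_of_nonneg _ _ zero_le_two]
  refine le_min ?_ ?_
  · linarith [abs_sub x y]
  · linarith [abs_sub_abs_le_abs_sub y x, abs_sub_comm x y]

lemma mul_min_le_add_mul_min {x H τ : ℝ} (hx : 0 ≤ x) (hH : 0 ≤ H) (hτ : 0 ≤ τ) :
    τ * min x H ≤ (H + τ) * min x τ := by
  rcases le_total x τ with hxτ | hτx
  · rw [min_eq_left hxτ]
    exact mul_le_mul (by linarith) (min_le_left x H) (le_min hx hH) (by linarith)
  · rw [min_eq_right hτx, mul_comm]
    exact mul_le_mul_of_nonneg_right ((min_le_right x H).trans (by linarith)) hτ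

lemma min_le_rpow_mul_rpow {x τ q : ℝ} (hx : 0 ≤ x) (hτ : 0 ≤ τ) (hq0 : 0 ≤ q) (hq1 : q ≤ 1) :
    min x τ ≤ τ ^ (1 - q) * x ^ q := by
  have hmin : 0 ≤ min x τ := le_min hx hτ
  have hq : 0 ≤ 1 - q := sub_nonneg.2 hq1
  calc min x τ = min x τ ^ (1 - q) * min x τ ^ q := by
        rw [← Real.rpow_add_of_nonneg hmin hq hq0, sub_add_cancel, Real.rpow_one]
    _ ≤ τ ^ (1 - q) * x ^ q := by
        gcongr
        · exact min_le_right x τ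
        · exact min_le_left x τ

lemma sum_min_mul_le_half_of_sum_rpow_le {ι : Type*} [Fintype ι] {a : ι → ℝ} {A lam q s : ℝ}
    (hA : 0 ≤ A) (hlam : 0 ≤ lam) (hq0 : 0 ≤ q) (hq1 : q < 1) (ha : ∑ i, |a i| ^ q ≤ s)
    (hs : A ^ (-q) * lam ^ (1 - q) * s ≤ 1 / 2) : ∑ i, min |a i| (A * lam) ≤ A / 2 := by
  have hτ : 0 ≤ A * lam := mul_nonneg hA hlam
  have hpow : A ^ (1 - q) = A * A ^ (-q) := by
    rw [sub_eq_add_neg, Real.rpow_add' hA (by linarith), Real.rpow_one]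
  calc ∑ i, min |a i| (A * lam) ≤ ∑ i, (A * lam) ^ (1 - q) * |a i| ^ q :=
        Finset.sum_le_sum fun i _ => min_le_rpow_mul_rpow (abs_nonneg _) hτ hq0 hq1.le
    _ ≤ (A * lam) ^ (1 - q) * s := by
        rw [← Finset.mul_sum]
        gcongr
    _ = A * (A ^ (-q) * lam ^ (1 - q) * s) := by
        rw [Real.mul_rpow hA hlam, hpow]
        ring
    _ ≤ A / 2 := by
        rw [div_eq_mul_one_div]
        gcongr

end RealInequalities

section Norms

variable {p : ℕ}

lemma vecL1_nonneg (a : Fin p → ℝ) : 0 ≤ vecL1 a :=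
  Finset.sum_nonneg fun _ _ => abs_nonneg _

lemma vecL1_add_le (a b : Fin p → ℝ) : vecL1 (a + b) ≤ vecL1 a + vecL1 b :=
  (Finset.sum_le_sum fun _ _ => abs_add_le _ _).trans_eq Finset.sum_add_distrib

lemma vecL1_smul (t : ℝ) (a : Fin p → ℝ) : vecL1 (t • a) = |t| * vecL1 a := by
  simp only [vecL1, Pi.smul_apply, smul_eq_mul, abs_mul, Finset.mul_sum]

lemma vecL1_single (k : Fin p) (c : ℝ) : vecL1 (Pi.single k c) = |c| := by
  rw [vecL1, Fintype.sum_eq_single k fun j hj => by rw [Pi.single_eq_of_ne hj, abs_zero],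
    Pi.single_eq_same]

lemma matL1_nonneg (A : Matrix (Fin p) (Fin p) ℝ) : 0 ≤ matL1 A :=
  Real.iSup_nonneg fun _ => Finset.sum_nonneg fun _ _ => abs_nonneg _

lemma matLinf_nonneg (A : Matrix (Fin p) (Fin p) ℝ) : 0 ≤ matLinf A :=
  Real.iSup_nonneg fun _ => Real.iSup_nonneg fun _ => abs_nonneg _

lemma vecL1_col_le_matL1 (A : Matrix (Fin p) (Fin p) ℝ) (j : Fin p) :
    vecL1 (A.col j) ≤ matL1 A :=
  le_ciSup (f := fun j => ∑ i, |A i j|) (Set.finite_range _).bddAbove j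

lemma matL1_pos_of_isUnit {A : Matrix (Fin p) (Fin p) ℝ} (hA : IsUnit A) (i : Fin p) :
    0 < matL1 A := by
  refine (matL1_nonneg A).lt_of_ne' fun hzero => ?_
  have hcol : ∑ k, |A k i| = 0 :=
    le_antisymm (hzero ▸ vecL1_col_le_matL1 A i) (vecL1_nonneg (A.col i))
  have hentry (k : Fin p) : A k i = 0 :=
    abs_eq_zero.1 ((Finset.sum_eq_zero_iff_of_nonneg fun _ _ => abs_nonneg _).1 hcol k
      (Finset.mem_univ k))
  exact ((isUnit_iff_isUnit_det A).1 hA).ne_zero (det_eq_zero_of_column_eq_zero i hentry)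

lemma abs_le_matLinf (A : Matrix (Fin p) (Fin p) ℝ) (i j : Fin p) : |A i j| ≤ matLinf A :=
  (le_ciSup (f := fun j => |A i j|) (Set.finite_range _).bddAbove j).trans
    (le_ciSup (f := fun i => ⨆ j, |A i j|) (Set.finite_range _).bddAbove i)

lemma matLinf_le {A : Matrix (Fin p) (Fin p) ℝ} {c : ℝ} (hc : 0 ≤ c) (h : ∀ i j, |A i j| ≤ c) :
    matLinf A ≤ c :=
  Real.iSup_le (fun i => Real.iSup_le (h i) hc) hc

lemma abs_dotProduct_le_mul_vecL1 {a : Fin p → ℝ} {c : ℝ} (ha : ∀ i, |a i| ≤ c)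
    (b : Fin p → ℝ) : |a ⬝ᵥ b| ≤ c * vecL1 b := by
  rw [vecL1, Finset.mul_sum]
  refine (Finset.abs_sum_le_sum_abs _ _).trans (Finset.sum_le_sum fun i _ => ?_)
  rw [abs_mul]
  exact mul_le_mul_of_nonneg_right (ha i) (abs_nonneg _)

lemma abs_mulVec_le_matLinf_mul_vecL1 (A : Matrix (Fin p) (Fin p) ℝ) (v : Fin p → ℝ)
    (i : Fin p) : |(A *ᵥ v) i| ≤ matLinf A * vecL1 v :=
  abs_dotProduct_le_mul_vecL1 (abs_le_matLinf A i) v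

lemma abs_vecMul_le_mul_matL1 (A : Matrix (Fin p) (Fin p) ℝ) {v : Fin p → ℝ} {c : ℝ}
    (hv : ∀ i, |v i| ≤ c) (j : Fin p) : |(v ᵥ* A) j| ≤ c * matL1 A :=
  (abs_dotProduct_le_mul_vecL1 hv (A.col j)).trans
    (mul_le_mul_of_nonneg_left (vecL1_col_le_matL1 A j) ((abs_nonneg _).trans (hv j)))

lemma vecL1_sub_add_vecL1_sub_vecL1_le {b β : Fin p → ℝ} {H : ℝ} (hH : ∀ k, |(b - β) k| ≤ H) :
    vecL1 (b - β) + vecL1 β - vecL1 b ≤ 2 * ∑ k, min |β k| H := by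
  simp only [vecL1, ← Finset.sum_add_distrib, ← Finset.sum_sub_distrib, Finset.mul_sum]
  refine Finset.sum_le_sum fun k _ => (abs_sub_add_abs_sub_abs_le (b k) (β k)).trans ?_
  gcongr
  exact hH k

lemma abs_symmetrize_sub_le {A B : Matrix (Fin p) (Fin p) ℝ} {c : ℝ} (hB : B.IsSymm)
    (h : ∀ i j, |A i j - B i j| ≤ c) (i j : Fin p) : |symmetrize A i j - B i j| ≤ c := by
  rw [symmetrize]
  split_ifs
  · exact h i j
  · exact hB.apply i j ▸ h j i

end Norms

section Minimizer

variable {p : ℕ} {S : Matrix (Fin p) (Fin p) ℝ} {e b : Fin p → ℝ} {lam : ℝ}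

lemma scioObj_add (hS : S.IsSymm) (e : Fin p → ℝ) (lam : ℝ) (b v : Fin p → ℝ) :
    scioObj S e lam (b + v) = scioObj S e lam b + (S *ᵥ b - e) ⬝ᵥ v
      + 1 / 2 * (v ⬝ᵥ S *ᵥ v) + lam * (vecL1 (b + v) - vecL1 b) := by
  have hcross : b ⬝ᵥ S *ᵥ v = v ⬝ᵥ S *ᵥ b := by
    rw [dotProduct_mulVec, ← mulVec_transpose, hS.eq, dotProduct_comm]
  simp only [scioObj, mulVec_add, add_dotProduct, dotProduct_add, sub_dotProduct, hcross,
    dotProduct_comm (S *ᵥ b) v]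
  ring

lemma scioObj_minimizer_directional (hS : S.IsSymm) (hlam : 0 ≤ lam)
    (hmin : ∀ β, scioObj S e lam b ≤ scioObj S e lam β) (v : Fin p → ℝ) {t : ℝ} (ht : 0 < t) :
    0 ≤ ((S *ᵥ b - e) ⬝ᵥ v + lam * vecL1 v) + t * (1 / 2 * (v ⬝ᵥ S *ᵥ v)) := by
  have hobj := hmin (b + t • v)
  have htri : lam * (vecL1 (b + t • v) - vecL1 b) ≤ lam * (t * vecL1 v) := by
    rw [← abs_of_pos ht, ← vecL1_smul, abs_of_pos ht]
    exact mul_le_mul_of_nonneg_left (by linarith [vecL1_add_le b (t • v)]) hlam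
  rw [scioObj_add hS] at hobj
  simp only [mulVec_smul, smul_dotProduct, dotProduct_smul, smul_eq_mul] at hobj
  refine nonneg_of_mul_nonneg_right (a := t) ?_ ht
  linarith

lemma dotProduct_mulVec_nonneg_of_scioObj_minimizer (hS : S.IsSymm) (hlam : 0 ≤ lam)
    (hmin : ∀ β, scioObj S e lam b ≤ scioObj S e lam β) (v : Fin p → ℝ) :
    0 ≤ v ⬝ᵥ S *ᵥ v := by
  suffices 0 ≤ 1 / 2 * (v ⬝ᵥ S *ᵥ v) by linarith
  -- Dividing the directional inequality at `t⁻¹` by `t⁻¹` swaps the roles of its two terms.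
  refine nonneg_of_forall_pos_add_mul (b := (S *ᵥ b - e) ⬝ᵥ v + lam * vecL1 v) fun t ht => ?_
  have hdir := mul_nonneg ht.le (scioObj_minimizer_directional hS hlam hmin v (inv_pos.2 ht))
  rwa [mul_add, mul_inv_cancel_left₀ ht.ne', add_comm] at hdir

lemma abs_mulVec_sub_le_of_scioObj_minimizer (hS : S.IsSymm) (hlam : 0 ≤ lam)
    (hmin : ∀ β, scioObj S e lam b ≤ scioObj S e lam β) (k : Fin p) :
    |(S *ᵥ b - e) k| ≤ lam := by
  have hdir (c : ℝ) : 0 ≤ (S *ᵥ b - e) k * c + lam * |c| := by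
    rw [← vecL1_single k c, ← dotProduct_single]
    exact nonneg_of_forall_pos_add_mul fun _ => scioObj_minimizer_directional hS hlam hmin _
  have hpos := hdir 1
  have hneg := hdir (-1)
  rw [abs_one] at hpos
  rw [abs_neg, abs_one] at hneg
  exact abs_le.2 ⟨by linarith, by linarith⟩

lemma mul_vecL1_sub_vecL1_le_of_scioObj_minimizer (hS : S.IsSymm) (hlam : 0 ≤ lam)
    (hmin : ∀ β, scioObj S e lam b ≤ scioObj S e lam β) {β : Fin p → ℝ} {r : ℝ}
    (hβ : ∀ k, |(S *ᵥ β - e) k| ≤ r) :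
    lam * (vecL1 b - vecL1 β) ≤ r * vecL1 (b - β) := by
  have hobj := hmin β
  have hexp := scioObj_add hS e lam β (b - β)
  rw [add_sub_cancel] at hexp
  have hquad := dotProduct_mulVec_nonneg_of_scioObj_minimizer hS hlam hmin (b - β)
  have hlin := neg_le_of_abs_le (abs_dotProduct_le_mul_vecL1 hβ (b - β))
  linarith

end Minimizer

section ColumnError

variable {p : ℕ} {Ω S : Matrix (Fin p) (Fin p) ℝ} {lam : ℝ}

lemma abs_mulVec_col_sub_single_le (hΩ : IsUnit Ω) (i k : Fin p) :
    |(S *ᵥ Ω.col i - (Pi.single i 1 : Fin p → ℝ)) k| ≤ matLinf (S - Ω⁻¹) * matL1 Ω := by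
  have hcol : Ω⁻¹ *ᵥ Ω.col i = Pi.single i 1 := by
    rw [← mulVec_single_one, mulVec_mulVec, nonsing_inv_mul _ ((isUnit_iff_isUnit_det Ω).1 hΩ),
      one_mulVec]
  rw [← hcol, ← sub_mulVec]
  exact (abs_mulVec_le_matLinf_mul_vecL1 _ _ k).trans
    (mul_le_mul_of_nonneg_left (vecL1_col_le_matL1 Ω i) (matLinf_nonneg _))

lemma abs_le_of_abs_mulVec_le (hΩsym : Ω.IsSymm) (hΩ : IsUnit Ω) {v : Fin p → ℝ} {r : ℝ}
    (hv : ∀ k, |(S *ᵥ v) k| ≤ r) (k : Fin p) :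
    |v k| ≤ (r + matLinf (S - Ω⁻¹) * vecL1 v) * matL1 Ω := by
  have hinv (j : Fin p) : |(Ω⁻¹ *ᵥ v) j| ≤ r + matLinf (S - Ω⁻¹) * vecL1 v := by
    have hsplit : Ω⁻¹ *ᵥ v = S *ᵥ v - (S - Ω⁻¹) *ᵥ v := by rw [sub_mulVec, sub_sub_cancel]
    rw [hsplit]
    exact (abs_sub _ _).trans (add_le_add (hv j) (abs_mulVec_le_matLinf_mul_vecL1 _ _ j))
  have hrec : (Ω⁻¹ *ᵥ v) ᵥ* Ω = v := by
    rw [← mulVec_transpose, hΩsym.eq, mulVec_mulVec,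
      mul_nonsing_inv _ ((isUnit_iff_isUnit_det Ω).1 hΩ), one_mulVec]
  simpa only [hrec] using abs_vecMul_le_mul_matL1 Ω hinv k

lemma mul_vecL1_sub_le_of_sum_min_le {b β : Fin p → ℝ} {A H : ℝ} (hA : 0 < A) (hlam : 0 ≤ lam)
    (hcone : lam * (vecL1 b - vecL1 β) ≤ lam / 3 * vecL1 (b - β)) (hH0 : 0 ≤ H)
    (hH : ∀ k, |(b - β) k| ≤ H) (hsparse : ∑ k, min |β k| (A * lam) ≤ A / 2) :
    lam * vecL1 (b - β) ≤ 3 / 2 * (H + A * lam) := by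
  have hτ : 0 ≤ A * lam := mul_nonneg hA.le hlam
  have hcap : A * lam * ∑ k, min |β k| H ≤ (H + A * lam) * (A / 2) :=
    calc A * lam * ∑ k, min |β k| H ≤ (H + A * lam) * ∑ k, min |β k| (A * lam) := by
          rw [Finset.mul_sum, Finset.mul_sum]
          exact Finset.sum_le_sum fun k _ => mul_min_le_add_mul_min (abs_nonneg _) hH0 hτ
      _ ≤ (H + A * lam) * (A / 2) := by gcongr
  have hL : lam * vecL1 (b - β) ≤ 3 * (lam * ∑ k, min |β k| H) := by
    linarith [mul_le_mul_of_nonneg_left (vecL1_sub_add_vecL1_sub_vecL1_le hH) hlam]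
  refine le_of_mul_le_mul_left ?_ hA
  linarith [mul_le_mul_of_nonneg_left hL hA.le]

lemma abs_scio_column_sub_le (hΩsym : Ω.IsSymm) (hΩ : IsUnit Ω) (hS : S.IsSymm)
    (hlam : 3 * matL1 Ω * matLinf (S - Ω⁻¹) ≤ lam) {i : Fin p}
    (hsparse : ∑ k, min |Ω k i| (matL1 Ω * lam) ≤ matL1 Ω / 2) {b : Fin p → ℝ}
    (hmin : ∀ β, scioObj S (Pi.single i 1) lam b ≤ scioObj S (Pi.single i 1) lam β)
    (k : Fin p) : |b k - Ω k i| ≤ 4 * matL1 Ω * lam := by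
  have hA : 0 < matL1 Ω := matL1_pos_of_isUnit hΩ i
  have hD : 0 ≤ matLinf (S - Ω⁻¹) := matLinf_nonneg _
  have hlam0 : 0 ≤ lam := le_trans (by positivity) hlam
  set h := b - Ω.col i
  have hcol (k : Fin p) : |(S *ᵥ Ω.col i - (Pi.single i 1 : Fin p → ℝ)) k| ≤ lam / 3 :=
    (abs_mulVec_col_sub_single_le hΩ i k).trans (by linarith)
  have hresid (k : Fin p) : |(S *ᵥ h) k| ≤ 4 / 3 * lam := by
    have hsplit : S *ᵥ h = (S *ᵥ b - Pi.single i 1) - (S *ᵥ Ω.col i - Pi.single i 1) := by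
      rw [mulVec_sub, sub_sub_sub_cancel_right]
    rw [hsplit]
    refine (abs_sub _ _).trans ?_
    linarith [abs_mulVec_sub_le_of_scioObj_minimizer hS hlam0 hmin k, hcol k]
  have hsup : ‖h‖ ≤ 4 / 3 * (matL1 Ω * lam) + 1 / 3 * (lam * vecL1 h) := by
    have hL := vecL1_nonneg h
    refine (pi_norm_le_iff_of_nonneg (by positivity)).2 fun k => ?_
    have hk := abs_le_of_abs_mulVec_le hΩsym hΩ hresid k
    rw [Real.norm_eq_abs]
    linarith [mul_le_mul_of_nonneg_right hlam hL]
  have hL : lam * vecL1 h ≤ 3 / 2 * (‖h‖ + matL1 Ω * lam) :=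
    mul_vecL1_sub_le_of_sum_min_le hA hlam0
      (mul_vecL1_sub_vecL1_le_of_scioObj_minimizer hS hlam0 hmin hcol) (norm_nonneg _)
      (norm_le_pi_norm h) hsparse
  have hτ : 0 ≤ matL1 Ω * lam := by positivity
  calc |b k - Ω k i| ≤ ‖h‖ := norm_le_pi_norm h k
    _ ≤ 4 * matL1 Ω * lam := by linarith

end ColumnError

theorem scio_matrix_linf_bound_general {p : ℕ} {Ω S Ωhat : Matrix (Fin p) (Fin p) ℝ} {lam : ℝ}
    (hΩsym : Ω.IsSymm) (hΩ : IsUnit Ω) (hS : S.IsSymm)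
    (hlam : 3 * matL1 Ω * matLinf (S - Ω⁻¹) ≤ lam)
    (hsparse : ∀ j, ∑ i, min |Ω i j| (matL1 Ω * lam) ≤ matL1 Ω / 2)
    (hmin : ∀ (i : Fin p) (β : Fin p → ℝ),
      scioObj S (Pi.single i 1) lam (Ωhat.col i) ≤ scioObj S (Pi.single i 1) lam β) :
    matLinf (symmetrize Ωhat - Ω) ≤ 4 * matL1 Ω * lam := by
  have hA := matL1_nonneg Ω
  have hD := matLinf_nonneg (S - Ω⁻¹)
  have hlam0 : 0 ≤ lam := le_trans (by positivity) hlam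
  exact matLinf_le (by positivity) <| abs_symmetrize_sub_le hΩsym fun k i =>
    abs_scio_column_sub_le hΩsym hΩ hS hlam (hsparse i) (hmin i) k

/-- Theorem 2, entrywise sup-norm bound: the symmetrized SCIO estimator Ω̃ satisfies
‖Ω̃ − Ω‖_∞ ≤ 4 ‖Ω‖_{L1} λ. -/
theorem scio_matrix_linf_bound {p : ℕ} (q s M : ℝ) (hq0 : 0 ≤ q) (hq1 : q < 1)
    (hs : 0 < s) (hM : 0 < M)
    (Ω : Matrix (Fin p) (Fin p) ℝ) (hΩsym : Ω.IsSymm) (hΩpd : Ω.PosDef)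
    (hΩs : ∀ j, ∑ i, |Ω i j| ^ q ≤ s) (hΩM : matL1 Ω ≤ M)
    (Shat : Matrix (Fin p) (Fin p) ℝ) (hSsym : Shat.IsSymm)
    (lam : ℝ) (hlam0 : 0 ≤ lam)
    (hlam1 : 3 * matL1 Ω * matLinf (Shat - Ω⁻¹) ≤ lam)
    (hlam2 : (matL1 Ω) ^ (-q) * lam ^ (1 - q) * s ≤ 1 / 2)
    (Ωhat : Matrix (Fin p) (Fin p) ℝ)
    (hmin : ∀ (i : Fin p) (β : Fin p → ℝ),
      scioObj Shat (Pi.single i 1) lam (fun k => Ωhat k i) ≤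
        scioObj Shat (Pi.single i 1) lam β) :
    matLinf (symmetrize Ωhat - Ω) ≤ 4 * matL1 Ω * lam :=
  scio_matrix_linf_bound_general hΩsym hΩpd.isUnit hSsym hlam1 (fun j =>
    sum_min_mul_le_half_of_sum_rpow_le (matL1_nonneg Ω) hlam0 hq0 hq1 (hΩs j) hlam2) hmin
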